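/- In the online setting where each attacker best-responds to the played detection function, for any detection function π : V → [0,1] and its induced utility profile G^π with Gᵢ^π = max_v{Uᵢᵘ(v) − π(v)(Uᵢᵘ(v)+Uᵢᵈ(v))}, the per-round surrogate loss satisfies: (a) for any round against a non-attacker with vector v, π(v)·c_fa(v) ≥ π_{G^π}(v)·c_fa(v); and (b) for any round against a best-responding type-i attacker, the expected loss equals Gᵢ^π. Consequently, min over π of the total expected loss equals min over G of the surrogate Σ_t c_t(G), where c_t(G) = Gᵢ on attacker rounds of type i and c_t(G) = π_G(v_t)c_fa(v_t) on non-attacker rounds with vector v_t. -/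

import Mathlib

open Finset

/-- The optimal probability of detection associated with utility profile `G`. -/
noncomputable def piG {V : Type*} [Fintype V] {m : ℕ} (Uu Ud : Fin m → V → ℝ)
    (G : Fin m → ℝ) (v : V) : ℝ :=
  max 0 (⨆ i, (Uu i v - G i) / (Uu i v + Ud i v))

/-- The minimum possible attacker gain `G̲ᵢ = max_v (−Uᵢᵈ(v))`. -/
noncomputable def Glo {V : Type*} [Fintype V] {m : ℕ} (Ud : Fin m → V → ℝ)
    (i : Fin m) : ℝ :=
  ⨆ v, -(Ud i v)

/-- The maximum possible attacker gain `Ḡᵢ = max_v Uᵢᵘ(v)`. -/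
noncomputable def Ghi {V : Type*} [Fintype V] {m : ℕ} (Uu : Fin m → V → ℝ)
    (i : Fin m) : ℝ :=
  ⨆ v, Uu i v

/-- The best-response utility profile `G^π` induced by a detection function `π`. -/
noncomputable def Gpi {V : Type*} [Fintype V] {m : ℕ} (Uu Ud : Fin m → V → ℝ)
    (π : V → ℝ) (i : Fin m) : ℝ :=
  ⨆ v, (Uu i v - π v * (Uu i v + Ud i v))

/-- Expected per-round loss of detection function `π` on a round: against a
best-responding type-`i` attacker (`Sum.inl i`) or a non-attacker vector (`Sum.inr v`). -/
noncomputable def roundLoss {V : Type*} [Fintype V] {m : ℕ} (Uu Ud : Fin m → V → ℝ)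
    (cfa : V → ℝ) (π : V → ℝ) : Sum (Fin m) V → ℝ
  | Sum.inl i => ⨆ v, (Uu i v * (1 - π v) - Ud i v * π v)
  | Sum.inr v => π v * cfa v

/-- Surrogate per-round loss `c_t(G)` used by the efficient online algorithm. -/
noncomputable def surrogateLoss {V : Type*} [Fintype V] {m : ℕ} (Uu Ud : Fin m → V → ℝ)
    (cfa : V → ℝ) (G : Fin m → ℝ) : Sum (Fin m) V → ℝ
  | Sum.inl i => G i
  | Sum.inr v => piG Uu Ud G v * cfa v

/-- (a) on non-attacker rounds `π_{G^π}` has no larger false-alarm loss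
than `π`; (b) against a best-responding type-`i` attacker the expected loss of `π` is
exactly `Gᵢ^π`; consequently the minimum over `π` of the total expected loss equals the
minimum over `G` in the box of the total surrogate loss. -/
theorem surrogate_loss_equivalence {V : Type*} [Fintype V] [Nonempty V] {m T : ℕ}
    (Uu Ud : Fin m → V → ℝ) (hs : ∀ i v, 0 < Uu i v + Ud i v)
    (cfa : V → ℝ) (hcfa : ∀ v, 0 ≤ cfa v)
    (outcome : Fin T → Sum (Fin m) V) :
    -- (a)
    (∀ π : V → ℝ, (∀ v, π v ∈ Set.Icc (0 : ℝ) 1) → ∀ v : V,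
        piG Uu Ud (Gpi Uu Ud π) v * cfa v ≤ π v * cfa v)
    -- (b)
    ∧ (∀ π : V → ℝ, ∀ i : Fin m, roundLoss Uu Ud cfa π (Sum.inl i) = Gpi Uu Ud π i)
    -- consequence: equality of the two minima
    ∧ (∀ π : V → ℝ, (∀ v, π v ∈ Set.Icc (0 : ℝ) 1) →
        ∃ G : Fin m → ℝ, (∀ i, G i ∈ Set.Icc (Glo Ud i) (Ghi Uu i)) ∧
          ∑ t, surrogateLoss Uu Ud cfa G (outcome t)
            ≤ ∑ t, roundLoss Uu Ud cfa π (outcome t))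
    ∧ (∀ G : Fin m → ℝ, (∀ i, G i ∈ Set.Icc (Glo Ud i) (Ghi Uu i)) →
        ∃ π : V → ℝ, (∀ v, π v ∈ Set.Icc (0 : ℝ) 1) ∧
          ∑ t, roundLoss Uu Ud cfa π (outcome t)
            ≤ ∑ t, surrogateLoss Uu Ud cfa G (outcome t)) := by
  have bdd : ∀ f : V → ℝ, BddAbove (Set.range f) := fun f => (Set.finite_range f).bddAbove
  have hG : ∀ (π : V → ℝ) i v, Uu i v - π v * (Uu i v + Ud i v) ≤ Gpi Uu Ud π i :=
    fun π i v => le_ciSup (bdd (fun v => Uu i v - π v * (Uu i v + Ud i v))) v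
  have ha : ∀ π : V → ℝ, (∀ v, π v ∈ Set.Icc (0 : ℝ) 1) → ∀ v : V,
      piG Uu Ud (Gpi Uu Ud π) v * cfa v ≤ π v * cfa v := by
    intro π hπ v
    refine mul_le_mul_of_nonneg_right ?_ (hcfa v)
    refine max_le (hπ v).1 (Real.iSup_le (fun i => ?_) (hπ v).1)
    rw [div_le_iff₀ (hs i v)]
    linarith [hG π i v]
  have hb : ∀ π : V → ℝ, ∀ i : Fin m,
      roundLoss Uu Ud cfa π (Sum.inl i) = Gpi Uu Ud π i := by
    intro π i
    simp only [roundLoss, Gpi]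
    congr 1
    funext v
    ring
  refine ⟨ha, hb, ?_, ?_⟩
  · intro π hπ
    refine ⟨Gpi Uu Ud π, fun i => ⟨ciSup_le fun v => ?_, ciSup_le fun v => ?_⟩,
      Finset.sum_le_sum fun t _ => ?_⟩
    · nlinarith [hG π i v, (hπ v).2, hs i v]
    · have h1 : Uu i v ≤ Ghi Uu i := le_ciSup (bdd (fun v => Uu i v)) v
      linarith [mul_nonneg (hπ v).1 (hs i v).le]
    · rcases outcome t with i | v
      · exact (hb π i).ge
      · exact ha π hπ v
  · intro G hGb
    refine ⟨piG Uu Ud G, fun v => ⟨le_max_left _ _,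
      max_le zero_le_one (Real.iSup_le (fun i => ?_) zero_le_one)⟩,
      Finset.sum_le_sum fun t _ => ?_⟩
    · have h1 : -(Ud i v) ≤ Glo Ud i := le_ciSup (bdd (fun v => -(Ud i v))) v
      rw [div_le_iff₀ (hs i v)]
      linarith [(hGb i).1]
    · rcases outcome t with i | v
      · rw [hb]
        refine ciSup_le fun v => ?_
        have h1 : (Uu i v - G i) / (Uu i v + Ud i v) ≤ piG Uu Ud G v :=
          le_max_of_le_right (le_ciSup
            (f := fun i => (Uu i v - G i) / (Uu i v + Ud i v))
            (Set.finite_range _).bddAbove i)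
        rw [div_le_iff₀ (hs i v)] at h1
        simp only [surrogateLoss]
        linarith
      · exact le_rfl
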